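/- Let δ = 1/4601 and M̃ = 23003. For every polynomial P : ℂ → ℂ with ‖P‖_F ≤ δ there exists w ∈ ℂ with |w| = 1 such that ‖w(1+P) − 1‖_F ≤ M̃ · ‖ |1+P| − 1 ‖_F. -/

import Mathlib

open MeasureTheory

/-- The Fock norm of a function `F : ℂ → E`:
`‖F‖_F² = (1/π) ∫_ℂ ‖F(z)‖² e^{-|z|²} dm(z)`. -/
noncomputable def fockNorm {E : Type*} [NormedAddCommGroup E] (F : ℂ → E) : ℝ :=
  Real.sqrt ((1 / Real.pi) * ∫ z : ℂ, ‖F z‖ ^ 2 * Real.exp (-‖z‖ ^ 2))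

/-!
Multiply `F` by the unimodular `c` with `c F(0) ≥ 0`. Then `|cF - 1|` is at most
`2 |F - F(0)| + ||F| - 1|`, so it suffices to bound the oscillation `F - F(0)`.

The monomials are orthogonal for every rotation-invariant measure. For the Gaussian measure this
gives a Poincaré inequality bounding `F - F(0)` by `F'` in `L²` with the weight `(1 + |z|²)⁻¹`. For
the uniform measure on a disc of radius `r` around `a` it gives
`r |F'(a)| ≤ 4 (2 ⨍ ||F| - 1| + 1 - |F(a)|)`. The choice `r = 1 / (2 (1 + |a|))` makes `r²`
comparable to the Poincaré weight and keeps the Gaussian nearly constant on the disc; by Tonelli the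
local averages of `(|F| - 1)²` integrate to at most a constant times its Gaussian integral.
-/

open ComplexConjugate Metric Polynomial

section InvariantMeasures

variable {G X : Type*} [Group G] [MulAction G X] [MeasurableSpace X] [MeasurableConstSMul G X]
  {μ : Measure X} [SMulInvariantMeasure G X μ]

theorem smulInvariantMeasure_withDensity {f : X → ENNReal} (hf : ∀ (g : G) x, f (g • x) = f x) :
    SMulInvariantMeasure G X (μ.withDensity f) where
  measure_preimage_smul g s hs := by
    rw [withDensity_apply _ hs, withDensity_apply _ (measurable_const_smul g hs),
      ← (measurePreserving_smul g μ).setLIntegral_comp_preimage_emb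
        (measurableEmbedding_const_smul g) f s]
    simp only [hf]

theorem smulInvariantMeasure_restrict {s : Set X} (hs : MeasurableSet s)
    (hG : ∀ g : G, (g • ·) ⁻¹' s = s) : SMulInvariantMeasure G X (μ.restrict s) where
  measure_preimage_smul g t ht := by
    have h := ((measurePreserving_smul g μ).restrict_preimage hs).measure_preimage
      ht.nullMeasurableSet
    rwa [hG] at h

end InvariantMeasures

section RotationInvariance

instance : SMulInvariantMeasure Circle ℂ (volume : Measure ℂ) where
  measure_preimage_smul c _ hs :=
    (rotation c).measurePreserving.measure_preimage hs.nullMeasurableSet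

theorem integral_pow_mul_conj_pow_eq_zero {μ : Measure ℂ} [SMulInvariantMeasure Circle ℂ μ]
    {j k : ℕ} (hjk : j ≠ k) : ∫ z : ℂ, z ^ j * conj z ^ k ∂μ = 0 := by
  have hne : (j : ℂ) - k ≠ 0 := sub_ne_zero.2 (Nat.cast_injective.ne hjk)
  set t : ℝ := Real.pi / ((j : ℝ) - k) with ht
  have hphase : (Circle.exp t : ℂ) ^ j * conj (Circle.exp t : ℂ) ^ k = -1 := by
    rw [Circle.coe_exp, ← Complex.exp_conj, ← Complex.exp_nat_mul, ← Complex.exp_nat_mul,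
      ← Complex.exp_add, ← Complex.exp_pi_mul_I]
    congr 1
    simp only [map_mul, Complex.conj_ofReal, Complex.conj_I, ht]
    push_cast
    field_simp
    ring
  have hrot := integral_smul_eq_self (μ := μ) (fun z : ℂ => z ^ j * conj z ^ k)
    (g := Circle.exp t)
  have hneg (z : ℂ) : (Circle.exp t • z) ^ j * conj (Circle.exp t • z) ^ k =
      -(z ^ j * conj z ^ k) := by
    rw [Circle.smul_def, smul_eq_mul, map_mul, mul_pow, mul_pow]
    linear_combination (z ^ j * conj z ^ k) * hphase
  simp only [hneg, integral_neg] at hrot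
  exact self_eq_neg.1 hrot.symm

end RotationInvariance

section Moments

variable {μ : Measure ℂ} (hμ : ∀ k : ℕ, Integrable (fun z : ℂ => ‖z‖ ^ (2 * k)) μ)
include hμ

theorem memLp_two_polynomial_eval (Q : ℂ[X]) : MemLp (fun z => Q.eval z) 2 μ := by
  induction Q using Polynomial.induction_on' with
  | add P Q hP hQ => simpa only [eval_add] using! hP.add hQ
  | monomial n c =>
    have hpow : MemLp (fun z : ℂ => z ^ n) 2 μ := by
      rw [memLp_two_iff_integrable_sq_norm (by fun_prop)]
      simpa only [norm_pow, ← pow_mul, mul_comm n] using hμ n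
    simpa only [eval_monomial] using hpow.const_mul c

theorem memLp_two_norm_eval_sub_one (Q : ℂ[X]) : MemLp (fun z => ‖Q.eval z‖ - 1) 2 μ := by
  have : IsFiniteMeasure μ :=
    ⟨by simpa [integrable_const_iff, isFiniteMeasure_iff] using hμ 0⟩
  exact (memLp_two_polynomial_eval hμ Q).norm.sub (memLp_const 1)

theorem integrable_eval_mul_conj_eval (P Q : ℂ[X]) :
    Integrable (fun z => P.eval z * conj (Q.eval z)) μ :=
  (memLp_two_polynomial_eval hμ P).integrable_mul (memLp_two_polynomial_eval hμ Q).star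

variable [SMulInvariantMeasure Circle ℂ μ]

theorem integral_eval_mul_conj_pow (Q : ℂ[X]) (k : ℕ) :
    ∫ z, Q.eval z * conj z ^ k ∂μ = Q.coeff k * ∫ z : ℂ, ‖z‖ ^ (2 * k) ∂μ := by
  have hint (P : ℂ[X]) : Integrable (fun z => P.eval z * conj z ^ k) μ := by
    simpa using integrable_eval_mul_conj_eval hμ P (X ^ k)
  induction Q using Polynomial.induction_on' with
  | add P Q hP hQ =>
    simp only [eval_add, add_mul, coeff_add]
    rw [integral_add (hint P) (hint Q), hP, hQ]
  | monomial n c =>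
    simp only [eval_monomial, mul_assoc, integral_const_mul, coeff_monomial]
    split_ifs with hnk
    · subst hnk
      rw [← integral_complex_ofReal]
      congr 2 with z
      rw [← mul_pow, Complex.mul_conj, Complex.normSq_eq_norm_sq, ← Complex.ofReal_pow, pow_mul]
    · rw [integral_pow_mul_conj_pow_eq_zero hnk, mul_zero, zero_mul]

theorem integral_norm_eval_sq (Q : ℂ[X]) {N : ℕ} (hN : Q.natDegree < N) :
    ∫ z, ‖Q.eval z‖ ^ 2 ∂μ =
      ∑ k ∈ Finset.range N, ‖Q.coeff k‖ ^ 2 * ∫ z : ℂ, ‖z‖ ^ (2 * k) ∂μ := by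
  have hint (k : ℕ) : Integrable (fun z => conj (Q.coeff k) * (Q.eval z * conj z ^ k)) μ := by
    simpa using (integrable_eval_mul_conj_eval hμ Q (X ^ k)).const_mul (conj (Q.coeff k))
  have hexpand (z : ℂ) : ((‖Q.eval z‖ ^ 2 : ℝ) : ℂ) =
      ∑ k ∈ Finset.range N, conj (Q.coeff k) * (Q.eval z * conj z ^ k) := by
    rw [← Complex.normSq_eq_norm_sq, ← Complex.mul_conj]
    nth_rw 2 [eval_eq_sum_range' hN]
    rw [map_sum, Finset.mul_sum]
    refine Finset.sum_congr rfl fun k _ => ?_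
    rw [map_mul, map_pow]
    ring
  apply Complex.ofReal_injective
  rw [← integral_complex_ofReal]
  simp only [hexpand]
  rw [integral_finsetSum _ fun k _ => hint k, Complex.ofReal_sum]
  refine Finset.sum_congr rfl fun k _ => ?_
  rw [integral_const_mul, integral_eval_mul_conj_pow hμ, ← mul_assoc, mul_comm (conj _),
    Complex.mul_conj, Complex.normSq_eq_norm_sq, Complex.ofReal_mul]

theorem coeff_one_mul_integral_norm_sq (Q : ℂ[X]) :
    Q.coeff 1 * ∫ z : ℂ, ‖z‖ ^ 2 ∂μ =
      ∫ z, conj z * ((2 * ((Q.eval z).re - 1) : ℝ) : ℂ) ∂μ := by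
  have hint (P : ℂ[X]) (k : ℕ) : Integrable (fun z => P.eval z * conj z ^ k) μ := by
    simpa using integrable_eval_mul_conj_eval hμ P (X ^ k)
  have hanti : ∫ z, conj ((X * Q).eval z * conj z ^ 0) ∂μ = 0 := by
    rw [integral_conj, integral_eval_mul_conj_pow hμ]
    simp
  have hone : ∫ z, (1 : ℂ[X]).eval z * conj z ^ 1 ∂μ = 0 := by
    rw [integral_eval_mul_conj_pow hμ]
    simp [coeff_one]
  have hsplit (z : ℂ) : conj z * ((2 * ((Q.eval z).re - 1) : ℝ) : ℂ) =
      Q.eval z * conj z ^ 1 + conj ((X * Q).eval z * conj z ^ 0) -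
        2 * ((1 : ℂ[X]).eval z * conj z ^ 1) := by
    have hre : ((2 * ((Q.eval z).re - 1) : ℝ) : ℂ) = Q.eval z + conj (Q.eval z) - 2 := by
      rw [Complex.add_conj]
      push_cast
      ring
    simp only [hre, eval_mul, eval_X, eval_one, map_mul, pow_zero, pow_one, mul_one]
    ring
  have hintConj : Integrable (fun z => conj ((X * Q).eval z * conj z ^ 0)) μ :=
    Complex.conjLIE.integrable_comp_iff.2 (hint (X * Q) 0)
  simp only [hsplit]
  rw [integral_sub ((hint Q 1).fun_add hintConj) ((hint 1 1).const_mul 2),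
    integral_add (hint Q 1) hintConj, integral_const_mul, hanti, hone,
    integral_eval_mul_conj_pow hμ]
  simp

end Moments

section GradientBound

theorem integrable_norm_pow_of_ae_norm_le {μ : Measure ℂ} [IsFiniteMeasure μ] {ρ : ℝ}
    (hρ : ∀ᵐ u ∂μ, ‖u‖ ≤ ρ) (n : ℕ) :
    Integrable (fun u : ℂ => ‖u‖ ^ n) μ :=
  Integrable.of_bound (by fun_prop) (ρ ^ n) <| hρ.mono fun u hu => by
    simpa using pow_le_pow_left₀ (norm_nonneg u) hu n

variable {μ : Measure ℂ} [IsProbabilityMeasure μ] [SMulInvariantMeasure Circle ℂ μ]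

theorem integral_re_eval (hμ : ∀ k : ℕ, Integrable (fun z : ℂ => ‖z‖ ^ (2 * k)) μ) (Q : ℂ[X]) :
    ∫ z, (Q.eval z).re ∂μ = (Q.coeff 0).re := by
  have hint : Integrable (fun z => Q.eval z) μ :=
    (memLp_two_polynomial_eval hμ Q).integrable one_le_two
  have hmean := integral_eval_mul_conj_pow hμ Q 0
  simp only [pow_zero, mul_one, mul_zero, integral_const, probReal_univ, one_smul,
    Complex.ofReal_one] at hmean
  rw [← hmean]
  exact integral_re hint

theorem integral_abs_re_eval_sub_one_le
    (hμ : ∀ k : ℕ, Integrable (fun z : ℂ => ‖z‖ ^ (2 * k)) μ) (Q : ℂ[X]) :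
    ∫ z, |(Q.eval z).re - 1| ∂μ ≤ 2 * ∫ z, |‖Q.eval z‖ - 1| ∂μ + (1 - (Q.coeff 0).re) := by
  have hre : Integrable (fun z => (Q.eval z).re) μ :=
    ((memLp_two_polynomial_eval hμ Q).integrable one_le_two).re
  have habs : Integrable (fun z => |‖Q.eval z‖ - 1|) μ :=
    ((memLp_two_norm_eval_sub_one hμ Q).integrable one_le_two).abs
  have hdefect : Integrable (fun z => 1 - (Q.eval z).re) μ := (integrable_const 1).sub hre
  have hpointwise (z : ℂ) :
      |(Q.eval z).re - 1| ≤ 2 * |‖Q.eval z‖ - 1| + (1 - (Q.eval z).re) := by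
    have hle := Complex.re_le_norm (Q.eval z)
    have hself := le_abs_self (‖Q.eval z‖ - 1)
    have hnonneg := abs_nonneg (‖Q.eval z‖ - 1)
    rw [abs_le]
    constructor <;> linarith
  calc ∫ z, |(Q.eval z).re - 1| ∂μ
      ≤ ∫ z, 2 * |‖Q.eval z‖ - 1| + (1 - (Q.eval z).re) ∂μ :=
        integral_mono (hre.sub (integrable_const 1)).abs ((habs.const_mul 2).add hdefect) hpointwise
    _ = 2 * ∫ z, |‖Q.eval z‖ - 1| ∂μ + (1 - (Q.coeff 0).re) := by
        rw [integral_add (habs.const_mul 2) hdefect, integral_const_mul,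
          integral_sub (integrable_const 1) hre, integral_re_eval hμ]
        simp

-- After a rotation of the values `Q 0 ≥ 0`. Only then does the mean value property turn the
-- one-sided bound `Re Q - 1 ≤ |Q| - 1` into control of `∫ |Re Q - 1|`.
theorem norm_coeff_one_mul_integral_norm_sq_le {ρ : ℝ} (hρ : ∀ᵐ u ∂μ, ‖u‖ ≤ ρ) (Q : ℂ[X]) :
    ‖Q.coeff 1‖ * ∫ u : ℂ, ‖u‖ ^ 2 ∂μ ≤
      2 * ρ * (2 * ∫ u, |‖Q.eval u‖ - 1| ∂μ + (1 - ‖Q.coeff 0‖)) := by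
  have hμ (k : ℕ) := integrable_norm_pow_of_ae_norm_le hρ (2 * k)
  obtain ⟨c, hc, hcQ⟩ := Complex.exists_norm_eq_mul_self (Q.coeff 0)
  have hre : Integrable (fun u => |((C c * Q).eval u).re - 1|) μ :=
    (((memLp_two_polynomial_eval hμ (C c * Q)).integrable one_le_two).re.sub
      (integrable_const 1)).abs
  have hρ0 : 0 ≤ ρ := by
    obtain ⟨u, hu⟩ := hρ.exists
    exact (norm_nonneg u).trans hu
  calc ‖Q.coeff 1‖ * ∫ u : ℂ, ‖u‖ ^ 2 ∂μ
      = ‖(C c * Q).coeff 1 * ((∫ u : ℂ, ‖u‖ ^ 2 ∂μ : ℝ) : ℂ)‖ := by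
        rw [coeff_C_mul, norm_mul, norm_mul, hc, one_mul, Complex.norm_real,
          Real.norm_of_nonneg (integral_nonneg fun u => by positivity)]
    _ ≤ ∫ u, 2 * ρ * |((C c * Q).eval u).re - 1| ∂μ := by
        rw [coeff_one_mul_integral_norm_sq hμ]
        refine norm_integral_le_of_norm_le (hre.const_mul _) (hρ.mono fun u hu => ?_)
        rw [norm_mul, RCLike.norm_conj, Complex.norm_real, Real.norm_eq_abs, abs_mul, abs_two,
          mul_left_comm, mul_assoc 2]
        gcongr
    _ ≤ 2 * ρ * (2 * ∫ u, |‖(C c * Q).eval u‖ - 1| ∂μ + (1 - ((C c * Q).coeff 0).re)) := by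
        rw [integral_const_mul]
        gcongr
        exact integral_abs_re_eval_sub_one_le hμ _
    _ = 2 * ρ * (2 * ∫ u, |‖Q.eval u‖ - 1| ∂μ + (1 - ‖Q.coeff 0‖)) := by
        simp only [eval_mul, eval_C, coeff_C_mul, norm_mul, hc, one_mul, ← hcQ,
          Complex.ofReal_re]

end GradientBound

section BallAverages

theorem setAverage_ball_eq_setAverage_ball_zero {V E : Type*} [NormedAddCommGroup V]
    [MeasurableSpace V] [BorelSpace V] [NormedAddCommGroup E] [NormedSpace ℝ E] {μ : Measure V}
    [μ.IsAddRightInvariant] (f : V → E) (a : V) (ρ : ℝ) :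
    ⨍ z in ball a ρ, f z ∂μ = ⨍ u in ball 0 ρ, f (u + a) ∂μ := by
  have hball : (· + a) ⁻¹' ball a ρ = ball 0 ρ := by simp
  have hmp := measurePreserving_add_right μ a
  rw [setAverage_eq, setAverage_eq, ← hball, measureReal_def, measureReal_def,
    hmp.measure_preimage measurableSet_ball.nullMeasurableSet,
    hmp.setIntegral_preimage_emb (measurableEmbedding_addRight a)]

theorem setAverage_ball_zero_norm_sq {ρ : ℝ} (hρ : 0 < ρ) :
    ⨍ u in ball (0 : ℂ) ρ, ‖u‖ ^ 2 = ρ ^ 2 / 2 := by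
  have hradial : ∫ t in Set.Ioi (0 : ℝ), t ^ (Module.finrank ℝ ℂ - 1) •
      (Set.Iio ρ).indicator (· ^ 2) t = ρ ^ 4 / 4 := by
    have hcube : (fun t : ℝ => t ^ (Module.finrank ℝ ℂ - 1) • (Set.Iio ρ).indicator (· ^ 2) t) =
        (Set.Iio ρ).indicator (· ^ 3) := by
      ext t
      by_cases ht : t < ρ <;> simp [Complex.finrank_real_complex, ht, ← pow_succ']
    rw [hcube, setIntegral_indicator measurableSet_Iio, Set.Ioi_inter_Iio,
      ← integral_Ioc_eq_integral_Ioo, ← intervalIntegral.integral_of_le hρ.le, integral_pow]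
    norm_num
  have hind : (ball (0 : ℂ) ρ).indicator (fun u => ‖u‖ ^ 2) =
      fun u => (Set.Iio ρ).indicator (· ^ 2) ‖u‖ := by
    ext u
    simp [Set.indicator]
  rw [setAverage_eq, ← integral_indicator measurableSet_ball, hind,
    integral_fun_norm_addHaar (volume : Measure ℂ) ((Set.Iio ρ).indicator (· ^ 2)), hradial]
  simp only [measureReal_def, Complex.volume_ball, ENNReal.toReal_mul, ENNReal.toReal_pow,
    ENNReal.toReal_ofReal, ENNReal.coe_toReal, NNReal.coe_real_pi, Complex.finrank_real_complex,
    smul_eq_mul, nsmul_eq_mul, Nat.cast_ofNat, hρ.le, zero_le_one]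
  field_simp
  norm_num

theorem mul_norm_derivative_eval_le (F : ℂ[X]) (a : ℂ) {ρ : ℝ} (hρ : 0 < ρ) :
    ρ * ‖F.derivative.eval a‖ ≤
      4 * (2 * (⨍ z in ball a ρ, |‖F.eval z‖ - 1|) + (1 - ‖F.eval a‖)) := by
  set μ : Measure ℂ := (volume (ball (0 : ℂ) ρ))⁻¹ • volume.restrict (ball 0 ρ) with hμdef
  have : IsProbabilityMeasure μ := ProbabilityTheory.cond_isProbabilityMeasure_of_finite
    (measure_ball_pos volume 0 hρ).ne' measure_ball_lt_top.ne
  have : SMulInvariantMeasure Circle ℂ (volume.restrict (ball (0 : ℂ) ρ)) :=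
    smulInvariantMeasure_restrict measurableSet_ball fun c => by
      ext u
      simp [Circle.smul_def, Circle.norm_coe]
  have hsupp : ∀ᵐ u ∂μ, ‖u‖ ≤ ρ :=
    (ae_restrict_of_forall_mem measurableSet_ball fun u hu =>
      (mem_ball_zero_iff.1 hu).le).filter_mono (Measure.smul_absolutelyContinuous.ae_le)
  have hbound := norm_coeff_one_mul_integral_norm_sq_le hsupp (taylor a F)
  rw [hμdef, ← setAverage_eq', ← setAverage_eq', setAverage_ball_zero_norm_sq hρ,
    taylor_coeff_one, taylor_coeff_zero] at hbound
  simp only [taylor_eval] at hbound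
  rw [← setAverage_ball_eq_setAverage_ball_zero (fun z => |‖F.eval z‖ - 1|)] at hbound
  refine le_of_mul_le_mul_left ?_ (half_pos hρ)
  linarith

theorem sq_setAverage_abs_le {X : Type*} [MeasurableSpace X] {μ : Measure X} {s : Set X}
    (hs₀ : μ s ≠ 0) (hs : μ s ≠ ⊤) {f : X → ℝ} (hf : MemLp f 2 (μ.restrict s)) :
    (⨍ x in s, |f x| ∂μ) ^ 2 ≤ ⨍ x in s, f x ^ 2 ∂μ := by
  have : IsFiniteMeasure (μ.restrict s) := isFiniteMeasure_restrict.2 hs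
  simpa only [Function.comp_def, sq_abs] using! (even_two.convexOn_pow (𝕜 := ℝ)).map_set_average_le
    (by fun_prop) isClosed_univ hs₀ hs (by simp) (hf.integrable one_le_two).abs
    (by simpa [Function.comp_def, IntegrableOn] using hf.integrable_sq)

theorem integrableOn_ball_of_continuous {X E : Type*} [MetricSpace X] [ProperSpace X]
    [MeasurableSpace X] [OpensMeasurableSpace X] [NormedAddCommGroup E] {μ : Measure X}
    [IsFiniteMeasureOnCompacts μ] {f : X → E} (hf : Continuous f) (a : X) (ρ : ℝ) :
    IntegrableOn f (ball a ρ) μ :=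
  (hf.continuousOn.integrableOn_compact (isCompact_closedBall a ρ)).mono_set ball_subset_closedBall

theorem sq_mul_norm_derivative_eval_sq_le (F : ℂ[X]) (a : ℂ) {ρ : ℝ} (hρ : 0 < ρ) :
    ρ ^ 2 * ‖F.derivative.eval a‖ ^ 2 ≤
      128 * (⨍ z in ball a ρ, (‖F.eval z‖ - 1) ^ 2) + 32 * (‖F.eval a‖ - 1) ^ 2 := by
  have hLp : MemLp (fun z => ‖F.eval z‖ - 1) 2 (volume.restrict (ball a ρ)) :=
    memLp_two_norm_eval_sub_one
      (fun k => integrableOn_ball_of_continuous (f := fun z => ‖z‖ ^ (2 * k)) (by fun_prop) a ρ) F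
  have hjensen := sq_setAverage_abs_le (measure_ball_pos volume a hρ).ne'
    measure_ball_lt_top.ne hLp
  set A := ⨍ z in ball a ρ, |‖F.eval z‖ - 1|
  set n := ‖F.eval a‖
  calc ρ ^ 2 * ‖F.derivative.eval a‖ ^ 2
      = (ρ * ‖F.derivative.eval a‖) ^ 2 := (mul_pow _ _ 2).symm
    _ ≤ (4 * (2 * A + (1 - n))) ^ 2 :=
        pow_le_pow_left₀ (by positivity) (mul_norm_derivative_eval_le F a hρ) 2
    _ ≤ 128 * A ^ 2 + 32 * (n - 1) ^ 2 := by nlinarith [sq_nonneg (2 * A - (1 - n))]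
    _ ≤ _ := by gcongr

end BallAverages

section FockMeasure

/-- The Gaussian measure `π⁻¹ e^{-|z|²} dm(z)` on `ℂ`; the Fock norm is its `L²` norm. -/
noncomputable def fockMeasure : Measure ℂ :=
  volume.withDensity fun z => ENNReal.ofReal (Real.exp (-‖z‖ ^ 2) / Real.pi)

/-- The Gaussian measure damped by `(1 + |z|²)⁻¹`, the weight carried by the derivative in the
Poincaré inequality. -/
noncomputable def dampedFockMeasure : Measure ℂ :=
  fockMeasure.withDensity fun z => ENNReal.ofReal (1 / (1 + ‖z‖ ^ 2))

theorem integral_fockMeasure {E : Type*} [NormedAddCommGroup E] [NormedSpace ℝ E] (f : ℂ → E) :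
    ∫ z, f z ∂fockMeasure = ∫ z, (Real.exp (-‖z‖ ^ 2) / Real.pi) • f z := by
  rw [fockMeasure, integral_withDensity_eq_integral_toReal_smul (by fun_prop) (by simp)]
  congr 1 with z
  rw [ENNReal.toReal_ofReal (by positivity)]

theorem integral_dampedFockMeasure (f : ℂ → ℝ) :
    ∫ z, f z ∂dampedFockMeasure = ∫ z, f z / (1 + ‖z‖ ^ 2) ∂fockMeasure := by
  rw [dampedFockMeasure, integral_withDensity_eq_integral_toReal_smul (by fun_prop) (by simp)]
  congr 1 with z
  rw [ENNReal.toReal_ofReal (by positivity), smul_eq_mul, one_div_mul_eq_div]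

theorem fockNorm_eq_sqrt_integral {E : Type*} [NormedAddCommGroup E] (F : ℂ → E) :
    fockNorm F = √(∫ z, ‖F z‖ ^ 2 ∂fockMeasure) := by
  rw [fockNorm, integral_fockMeasure, ← integral_const_mul]
  congr 2 with z
  rw [smul_eq_mul]
  ring

instance : SMulInvariantMeasure Circle ℂ fockMeasure :=
  smulInvariantMeasure_withDensity fun c z => by simp [Circle.smul_def, Circle.norm_coe]

instance : SMulInvariantMeasure Circle ℂ dampedFockMeasure :=
  smulInvariantMeasure_withDensity fun c z => by simp [Circle.smul_def, Circle.norm_coe]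

theorem integral_norm_pow_fockMeasure (k : ℕ) :
    ∫ z : ℂ, ‖z‖ ^ (2 * k) ∂fockMeasure = k.factorial := by
  have hgamma := Complex.integral_rpow_mul_exp_neg_rpow (p := 2) (q := (2 * k : ℕ)) one_le_two
    ((by norm_num : (-2 : ℝ) < 0).trans_le (Nat.cast_nonneg _))
  simp only [Real.rpow_natCast, Real.rpow_two] at hgamma
  have harg : (((2 * k : ℕ) : ℝ) + 2) / 2 = k + 1 := by
    push_cast
    ring
  rw [harg, Real.Gamma_nat_eq_factorial] at hgamma
  have hcomm (z : ℂ) : (Real.exp (-‖z‖ ^ 2) / Real.pi) • ‖z‖ ^ (2 * k) =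
      Real.pi⁻¹ * (‖z‖ ^ (2 * k) * Real.exp (-‖z‖ ^ 2)) := by
    rw [smul_eq_mul]
    ring
  simp only [integral_fockMeasure, hcomm]
  rw [integral_const_mul, hgamma]
  field_simp

theorem integrable_norm_pow_fockMeasure (k : ℕ) :
    Integrable (fun z : ℂ => ‖z‖ ^ (2 * k)) fockMeasure := by
  refine .of_integral_ne_zero ?_
  rw [integral_norm_pow_fockMeasure]
  exact_mod_cast k.factorial_ne_zero

theorem dampedFockMeasure_le : dampedFockMeasure ≤ fockMeasure := by
  conv_rhs => rw [← withDensity_one (μ := fockMeasure)]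
  refine withDensity_mono (.of_forall fun z => ?_)
  rw [Pi.one_apply, ENNReal.ofReal_le_one, div_le_one (by positivity)]
  nlinarith [sq_nonneg ‖z‖]

theorem integrable_norm_pow_dampedFockMeasure (k : ℕ) :
    Integrable (fun z : ℂ => ‖z‖ ^ (2 * k)) dampedFockMeasure :=
  (integrable_norm_pow_fockMeasure k).mono_measure dampedFockMeasure_le

theorem two_div_sub_div_sq_le_one_div {s x : ℝ} (hs : 0 < s) (hx : 0 < x) :
    2 / s - x / s ^ 2 ≤ 1 / x := by
  have hgap : 1 / x - (2 / s - x / s ^ 2) = (s - x) ^ 2 / (s ^ 2 * x) := by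
    field_simp
    ring
  rw [← sub_nonneg, hgap]
  positivity

-- Jensen's inequality for `x ↦ 1 / (1 + x)` under the law with density `‖z‖ ^ (2 * k) / k!`, for
-- which `‖z‖ ^ 2` has mean `k + 1`, with the tangent line at that mean as affine minorant.
theorem factorial_div_le_integral_norm_pow_dampedFockMeasure (k : ℕ) :
    (k.factorial : ℝ) / (k + 2) ≤ ∫ z : ℂ, ‖z‖ ^ (2 * k) ∂dampedFockMeasure := by
  set s : ℝ := k + 2 with hs
  have hk := integrable_norm_pow_fockMeasure k
  have hk1 := integrable_norm_pow_fockMeasure (k + 1)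
  have hdamped : Integrable (fun z : ℂ => ‖z‖ ^ (2 * k) / (1 + ‖z‖ ^ 2)) fockMeasure :=
    hk.mono' (Measurable.aestronglyMeasurable (by fun_prop)) <| .of_forall fun z => by
      rw [Real.norm_of_nonneg (by positivity)]
      exact div_le_self (by positivity) (by nlinarith [sq_nonneg ‖z‖])
  calc (k.factorial : ℝ) / s
      = (2 / s - 1 / s ^ 2) * k.factorial - 1 / s ^ 2 * (k + 1).factorial := by
        rw [Nat.factorial_succ, hs]
        push_cast
        field_simp
        ring
    _ = ∫ z : ℂ, (2 / s - 1 / s ^ 2) * ‖z‖ ^ (2 * k) - 1 / s ^ 2 * ‖z‖ ^ (2 * (k + 1))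
          ∂fockMeasure := by
        rw [integral_sub (hk.const_mul _) (hk1.const_mul _), integral_const_mul,
          integral_const_mul, integral_norm_pow_fockMeasure, integral_norm_pow_fockMeasure]
    _ ≤ ∫ z : ℂ, ‖z‖ ^ (2 * k) / (1 + ‖z‖ ^ 2) ∂fockMeasure := by
        refine integral_mono ((hk.const_mul _).sub (hk1.const_mul _)) hdamped fun z => ?_
        calc (2 / s - 1 / s ^ 2) * ‖z‖ ^ (2 * k) - 1 / s ^ 2 * ‖z‖ ^ (2 * (k + 1))
            = ‖z‖ ^ (2 * k) * (2 / s - (1 + ‖z‖ ^ 2) / s ^ 2) := by ring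
          _ ≤ ‖z‖ ^ (2 * k) * (1 / (1 + ‖z‖ ^ 2)) := by
              gcongr
              exact two_div_sub_div_sq_le_one_div (by positivity) (by positivity)
          _ = ‖z‖ ^ (2 * k) / (1 + ‖z‖ ^ 2) := mul_one_div _ _
    _ = ∫ z : ℂ, ‖z‖ ^ (2 * k) ∂dampedFockMeasure := (integral_dampedFockMeasure _).symm

theorem integral_norm_eval_sub_eval_zero_sq_le (F : ℂ[X]) :
    ∫ z, ‖F.eval z - F.eval 0‖ ^ 2 ∂fockMeasure ≤
      2 * ∫ z, ‖F.derivative.eval z‖ ^ 2 ∂dampedFockMeasure := by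
  have hcoeff (k : ℕ) : ‖(F - C (F.eval 0)).coeff (k + 1)‖ ^ 2 * (k + 1).factorial ≤
      2 * (‖F.derivative.coeff k‖ ^ 2 * ((k.factorial : ℝ) / (k + 2))) := by
    rw [coeff_sub, coeff_C_succ, sub_zero, coeff_derivative, norm_mul, Nat.factorial_succ,
      ← Nat.cast_succ, Complex.norm_natCast]
    push_cast
    have hratio : 1 ≤ 2 * ((k : ℝ) + 1) / (k + 2) := by
      rw [le_div_iff₀ (by positivity)]
      linarith [(Nat.cast_nonneg k : (0 : ℝ) ≤ k)]
    refine (le_mul_of_one_le_right (by positivity) hratio).trans_eq ?_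
    field_simp
  have hdegree : (F - C (F.eval 0)).natDegree < F.natDegree + 1 + 1 := by
    rw [natDegree_sub_C]
    omega
  have hdegree' : F.derivative.natDegree < F.natDegree + 1 := by
    have := natDegree_derivative_le F
    omega
  have hparseval := integral_norm_eval_sq integrable_norm_pow_fockMeasure _ hdegree
  simp only [eval_sub, eval_C] at hparseval
  rw [hparseval, integral_norm_eval_sq integrable_norm_pow_dampedFockMeasure _ hdegree',
    Finset.sum_range_succ', Finset.mul_sum]
  simp only [integral_norm_pow_fockMeasure, coeff_zero_eq_eval_zero, eval_sub, eval_C, sub_self,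
    norm_zero, zero_pow two_ne_zero, zero_mul, add_zero]
  refine Finset.sum_le_sum fun k _ => (hcoeff k).trans ?_
  gcongr
  exact factorial_div_le_integral_norm_pow_dampedFockMeasure k

end FockMeasure

section LocalAverages

theorem lintegral_mul_setLIntegral_ball_le {X : Type*} [PseudoMetricSpace X]
    [SecondCountableTopology X] [MeasurableSpace X] [OpensMeasurableSpace X] {μ : Measure X}
    [SFinite μ] {q v K : X → ENNReal} {r R : X → ℝ} (hq : Measurable q) (hK : Measurable K)
    (hR : Measurable R) (h : ∀ a z, dist z a < r a → dist a z < R z ∧ v a ≤ K z) :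
    ∫⁻ a, v a * ∫⁻ z in ball a (r a), q z ∂μ ∂μ ≤ ∫⁻ z, μ (ball z (R z)) * K z * q z ∂μ := by
  set k : X × X → ENNReal := {p | dist p.1 p.2 < R p.2}.indicator fun p => K p.2 * q p.2 with hk
  have hkm : Measurable k :=
    ((hK.comp measurable_snd).mul (hq.comp measurable_snd)).indicator
      (measurableSet_lt (by fun_prop) (by fun_prop))
  calc ∫⁻ a, v a * ∫⁻ z in ball a (r a), q z ∂μ ∂μ
      ≤ ∫⁻ a, ∫⁻ z, k (a, z) ∂μ ∂μ := by
        refine lintegral_mono fun a => ?_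
        rw [← lintegral_const_mul _ hq, ← lintegral_indicator measurableSet_ball]
        refine lintegral_mono (Set.indicator_le' (fun z hz => ?_) fun z _ => zero_le)
        obtain ⟨hdist, hv⟩ := h a z hz
        rw [hk, Set.indicator_of_mem (by exact hdist)]
        gcongr
    _ = ∫⁻ z, ∫⁻ a, k (a, z) ∂μ ∂μ :=
        lintegral_lintegral_swap (f := fun a z => k (a, z)) hkm.aemeasurable
    _ = ∫⁻ z, μ (ball z (R z)) * K z * q z ∂μ := by
        refine lintegral_congr fun z => ?_
        have hslice : (fun a => k (a, z)) = (ball z (R z)).indicator fun _ => K z * q z := rfl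
        rw [hslice, lintegral_indicator measurableSet_ball, setLIntegral_const, mul_comm,
          mul_assoc]

/-- The radius of the disc around `a` used for local estimates: it is so small that the Gaussian
weight and `1 + |z|` are comparable to their values at `a` on the whole disc. -/
noncomputable def localRadius (a : ℂ) : ℝ := 1 / (2 * (1 + ‖a‖))

theorem localRadius_pos (a : ℂ) : 0 < localRadius a := by
  unfold localRadius
  positivity

theorem localRadius_le_half (a : ℂ) : localRadius a ≤ 1 / 2 := by
  unfold localRadius
  gcongr
  linarith [norm_nonneg a]

section

variable {a z : ℂ} (h : dist z a < localRadius a)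
include h

theorem one_add_norm_le_of_dist_lt_localRadius : 1 + ‖a‖ ≤ 2 * (1 + ‖z‖) := by
  have hr := localRadius_le_half a
  have htriangle := norm_le_norm_add_norm_sub' a z
  rw [← dist_eq_norm, dist_comm] at htriangle
  linarith [norm_nonneg z]

theorem dist_lt_of_dist_lt_localRadius : dist a z < 1 / (1 + ‖z‖) := by
  rw [dist_comm]
  refine h.trans_le ?_
  have hr := localRadius_le_half a
  have htriangle := norm_le_norm_add_norm_sub' z a
  rw [← dist_eq_norm] at htriangle
  unfold localRadius
  gcongr
  linarith [norm_nonneg a]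

theorem exp_neg_norm_sq_le_of_dist_lt_localRadius :
    Real.exp (-‖a‖ ^ 2) ≤ 4 * Real.exp (-‖z‖ ^ 2) := by
  have htriangle := norm_le_norm_add_norm_sub' z a
  rw [← dist_eq_norm] at htriangle
  have hradius : localRadius a * ‖a‖ ≤ 1 / 2 := by
    rw [localRadius, one_div_mul_eq_div, div_le_div_iff₀ (by positivity) two_pos]
    linarith
  have hsq : ‖z‖ ^ 2 ≤ ‖a‖ ^ 2 + 5 / 4 := by
    nlinarith [localRadius_le_half a, localRadius_pos a, norm_nonneg z, norm_nonneg a]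
  have hlog : 5 / 4 ≤ Real.log 4 := by
    rw [show (4 : ℝ) = 2 ^ 2 by norm_num, Real.log_pow]
    push_cast
    linarith [Real.log_two_gt_d9]
  rw [← Real.exp_log four_pos, ← Real.exp_add]
  gcongr
  linarith

theorem exp_div_mul_sq_localRadius_le_of_dist_lt_localRadius :
    Real.exp (-‖a‖ ^ 2) / Real.pi / (Real.pi * localRadius a ^ 2) ≤
      64 * (Real.exp (-‖z‖ ^ 2) / Real.pi) / (Real.pi * (1 / (1 + ‖z‖)) ^ 2) := by
  calc Real.exp (-‖a‖ ^ 2) / Real.pi / (Real.pi * localRadius a ^ 2)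
      = Real.exp (-‖a‖ ^ 2) / Real.pi * (4 * (1 + ‖a‖) ^ 2) / Real.pi := by
        unfold localRadius
        field_simp
        norm_num
    _ ≤ 4 * Real.exp (-‖z‖ ^ 2) / Real.pi * (4 * (2 * (1 + ‖z‖)) ^ 2) / Real.pi := by
        gcongr
        · exact exp_neg_norm_sq_le_of_dist_lt_localRadius h
        · exact one_add_norm_le_of_dist_lt_localRadius h
    _ = 64 * (Real.exp (-‖z‖ ^ 2) / Real.pi) / (Real.pi * (1 / (1 + ‖z‖)) ^ 2) := by
        field_simp
        norm_num

end

theorem volume_ball_eq_ofReal (z : ℂ) {ρ : ℝ} (hρ : 0 ≤ ρ) :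
    volume (ball z ρ) = ENNReal.ofReal (Real.pi * ρ ^ 2) := by
  rw [Complex.volume_ball, ← ENNReal.ofReal_pow hρ, ← ENNReal.ofReal_coe_nnreal,
    NNReal.coe_real_pi, ← ENNReal.ofReal_mul (by positivity), mul_comm]

theorem lintegral_setLAverage_ball_localRadius_le {q : ℂ → ENNReal} (hq : Measurable q) :
    ∫⁻ a, (⨍⁻ z in ball a (localRadius a), q z ∂volume) ∂fockMeasure ≤
      64 * ∫⁻ z, q z ∂fockMeasure := by
  set d : ℂ → ENNReal := fun z => ENNReal.ofReal (Real.exp (-‖z‖ ^ 2) / Real.pi)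
  have hdm : Measurable d := by fun_prop
  set K : ℂ → ENNReal := fun z => ENNReal.ofReal
    (64 * (Real.exp (-‖z‖ ^ 2) / Real.pi) / (Real.pi * (1 / (1 + ‖z‖)) ^ 2))
  have hcompare (a z : ℂ) (h : dist z a < localRadius a) :
      dist a z < 1 / (1 + ‖z‖) ∧ d a / volume (ball a (localRadius a)) ≤ K z := by
    refine ⟨dist_lt_of_dist_lt_localRadius h, ?_⟩
    have hr := localRadius_pos a
    rw [volume_ball_eq_ofReal a hr.le, ← ENNReal.ofReal_div_of_pos (by positivity)]
    exact ENNReal.ofReal_le_ofReal (exp_div_mul_sq_localRadius_le_of_dist_lt_localRadius h)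
  have hmass (z : ℂ) : volume (ball z (1 / (1 + ‖z‖))) * K z = 64 * d z := by
    rw [volume_ball_eq_ofReal z (by positivity), ← ENNReal.ofReal_mul (by positivity),
      ← ENNReal.ofReal_ofNat 64, ← ENNReal.ofReal_mul (by positivity)]
    congr 1
    field_simp
  calc ∫⁻ a, (⨍⁻ z in ball a (localRadius a), q z ∂volume) ∂fockMeasure
      = ∫⁻ a, d a / volume (ball a (localRadius a)) * ∫⁻ z in ball a (localRadius a), q z := by
        rw [fockMeasure, lintegral_withDensity_eq_lintegral_mul_non_measurable _ hdm
          (.of_forall fun z => ENNReal.ofReal_lt_top)]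
        refine lintegral_congr fun a => ?_
        rw [Pi.mul_apply, setLAverage_eq, div_eq_mul_inv, div_eq_mul_inv, mul_assoc,
          mul_comm (_⁻¹)]
    _ ≤ ∫⁻ z, volume (ball z (1 / (1 + ‖z‖))) * K z * q z :=
        lintegral_mul_setLIntegral_ball_le hq (by fun_prop) (by fun_prop) hcompare
    _ = 64 * ∫⁻ z, q z ∂fockMeasure := by
        rw [fockMeasure, lintegral_withDensity_eq_lintegral_mul _ hdm hq,
          ← lintegral_const_mul _ (hdm.mul hq)]
        simp only [hmass, mul_assoc, Pi.mul_apply]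

theorem norm_derivative_eval_sq_div_le (F : ℂ[X]) (a : ℂ) :
    ‖F.derivative.eval a‖ ^ 2 / (1 + ‖a‖ ^ 2) ≤
      1024 * (⨍ z in ball a (localRadius a), (‖F.eval z‖ - 1) ^ 2) +
        256 * (‖F.eval a‖ - 1) ^ 2 := by
  have hweight : 1 / (1 + ‖a‖ ^ 2) ≤ 8 * localRadius a ^ 2 := by
    have hr : 8 * localRadius a ^ 2 = 2 / (1 + ‖a‖) ^ 2 := by
      unfold localRadius
      field_simp
      norm_num
    rw [hr, div_le_div_iff₀ (by positivity) (by positivity)]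
    nlinarith [sq_nonneg (1 - ‖a‖)]
  have hlocal := sq_mul_norm_derivative_eval_sq_le F a (localRadius_pos a)
  have hmul := mul_le_mul_of_nonneg_left hweight (sq_nonneg ‖F.derivative.eval a‖)
  rw [mul_one_div] at hmul
  linarith

theorem ofReal_norm_derivative_eval_sq_div_le (F : ℂ[X]) (a : ℂ) :
    ENNReal.ofReal (‖F.derivative.eval a‖ ^ 2 / (1 + ‖a‖ ^ 2)) ≤
      1024 * (⨍⁻ z in ball a (localRadius a), ENNReal.ofReal ((‖F.eval z‖ - 1) ^ 2) ∂volume) +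
        256 * ENNReal.ofReal ((‖F.eval a‖ - 1) ^ 2) := by
  have hint : IntegrableOn (fun z => (‖F.eval z‖ - 1) ^ 2) (ball a (localRadius a)) :=
    integrableOn_ball_of_continuous (by fun_prop) _ _
  have haverage : 0 ≤ ⨍ z in ball a (localRadius a), (‖F.eval z‖ - 1) ^ 2 :=
    integral_nonneg fun z => sq_nonneg _
  refine (ENNReal.ofReal_le_ofReal (norm_derivative_eval_sq_div_le F a)).trans_eq ?_
  rw [ENNReal.ofReal_add (by positivity) (by positivity), ENNReal.ofReal_mul (by norm_num),
    ENNReal.ofReal_mul (by norm_num), ofReal_setAverage hint (.of_forall fun z => sq_nonneg _),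
    ← setLAverage_eq, ENNReal.ofReal_ofNat, ENNReal.ofReal_ofNat]

theorem integral_norm_derivative_eval_sq_dampedFockMeasure_le (F : ℂ[X]) :
    ∫ a, ‖F.derivative.eval a‖ ^ 2 ∂dampedFockMeasure ≤
      65792 * ∫ z, (‖F.eval z‖ - 1) ^ 2 ∂fockMeasure := by
  set q : ℂ → ENNReal := fun z => ENNReal.ofReal ((‖F.eval z‖ - 1) ^ 2)
  have hqm : Measurable q := by fun_prop
  have hderivative :=
    (memLp_two_polynomial_eval integrable_norm_pow_dampedFockMeasure F.derivative).norm
  have hmodulus := memLp_two_norm_eval_sub_one integrable_norm_pow_fockMeasure F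
  rw [← ENNReal.ofReal_le_ofReal_iff (by positivity), ENNReal.ofReal_mul (by norm_num),
    ofReal_integral_eq_lintegral_ofReal hderivative.integrable_sq
      (.of_forall fun z => sq_nonneg _),
    ofReal_integral_eq_lintegral_ofReal hmodulus.integrable_sq
      (.of_forall fun z => sq_nonneg _)]
  calc ∫⁻ a, ENNReal.ofReal (‖F.derivative.eval a‖ ^ 2) ∂dampedFockMeasure
      = ∫⁻ a, ENNReal.ofReal (‖F.derivative.eval a‖ ^ 2 / (1 + ‖a‖ ^ 2)) ∂fockMeasure := by
        rw [dampedFockMeasure, lintegral_withDensity_eq_lintegral_mul _ (by fun_prop)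
          (by fun_prop)]
        refine lintegral_congr fun a => ?_
        rw [Pi.mul_apply, ← ENNReal.ofReal_mul (by positivity), one_div_mul_eq_div]
    _ ≤ ∫⁻ a, 1024 * (⨍⁻ z in ball a (localRadius a), q z ∂volume) + 256 * q a ∂fockMeasure :=
        lintegral_mono (ofReal_norm_derivative_eval_sq_div_le F)
    _ = 1024 * ∫⁻ a, (⨍⁻ z in ball a (localRadius a), q z ∂volume) ∂fockMeasure +
          256 * ∫⁻ z, q z ∂fockMeasure := by
        rw [lintegral_add_right _ (hqm.const_mul _), lintegral_const_mul' _ _ (by norm_num),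
          lintegral_const_mul _ hqm]
    _ ≤ 1024 * (64 * ∫⁻ z, q z ∂fockMeasure) + 256 * ∫⁻ z, q z ∂fockMeasure := by
        gcongr
        exact lintegral_setLAverage_ball_localRadius_le hqm
    _ = ENNReal.ofReal 65792 * ∫⁻ z, q z ∂fockMeasure := by
        rw [ENNReal.ofReal_ofNat]
        ring

end LocalAverages

section PhaseRetrieval

theorem norm_mul_sub_one_sq_le {c w₀ : ℂ} (hc : ‖c‖ = 1) (hcw₀ : (‖w₀‖ : ℂ) = c * w₀) (w : ℂ) :
    ‖c * w - 1‖ ^ 2 ≤ 6 * ‖w - w₀‖ ^ 2 + 3 * (‖w‖ - 1) ^ 2 := by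
  have hsplit : c * w - 1 = c * (w - w₀) + ((‖w₀‖ - ‖w‖ : ℝ) : ℂ) + ((‖w‖ - 1 : ℝ) : ℂ) := by
    push_cast
    rw [hcw₀]
    ring
  have hreverse : |‖w₀‖ - ‖w‖| ≤ ‖w - w₀‖ := by
    rw [norm_sub_rev]
    exact abs_norm_sub_norm_le w₀ w
  have htriangle : ‖c * w - 1‖ ≤ 2 * ‖w - w₀‖ + |‖w‖ - 1| := by
    rw [hsplit]
    refine norm_add₃_le.trans ?_
    rw [norm_mul, hc, one_mul, Complex.norm_real, Complex.norm_real, Real.norm_eq_abs,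
      Real.norm_eq_abs]
    linarith
  calc ‖c * w - 1‖ ^ 2
      ≤ (2 * ‖w - w₀‖ + |‖w‖ - 1|) ^ 2 := pow_le_pow_left₀ (norm_nonneg _) htriangle 2
    _ ≤ 6 * ‖w - w₀‖ ^ 2 + 3 * |‖w‖ - 1| ^ 2 := by
        linarith [sq_nonneg (‖w - w₀‖ - |‖w‖ - 1|)]
    _ = 6 * ‖w - w₀‖ ^ 2 + 3 * (‖w‖ - 1) ^ 2 := by rw [sq_abs]

theorem integral_norm_mul_eval_sub_one_sq_le {c : ℂ} (hc : ‖c‖ = 1) (F : ℂ[X])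
    (hcF : (‖F.eval 0‖ : ℂ) = c * F.eval 0) :
    ∫ z, ‖c * F.eval z - 1‖ ^ 2 ∂fockMeasure ≤
      789507 * ∫ z, (‖F.eval z‖ - 1) ^ 2 ∂fockMeasure := by
  have hsq (Q : ℂ[X]) : Integrable (fun z => ‖Q.eval z‖ ^ 2) fockMeasure :=
    (memLp_two_polynomial_eval integrable_norm_pow_fockMeasure Q).norm.integrable_sq
  have hphase : Integrable (fun z => ‖c * F.eval z - 1‖ ^ 2) fockMeasure := by
    simpa using hsq (C c * F - 1)
  have hosc : Integrable (fun z => ‖F.eval z - F.eval 0‖ ^ 2) fockMeasure := by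
    simpa using hsq (F - C (F.eval 0))
  have hmodulus : Integrable (fun z => (‖F.eval z‖ - 1) ^ 2) fockMeasure :=
    (memLp_two_norm_eval_sub_one integrable_norm_pow_fockMeasure F).integrable_sq
  calc ∫ z, ‖c * F.eval z - 1‖ ^ 2 ∂fockMeasure
      ≤ ∫ z, 6 * ‖F.eval z - F.eval 0‖ ^ 2 + 3 * (‖F.eval z‖ - 1) ^ 2 ∂fockMeasure :=
        integral_mono hphase ((hosc.const_mul 6).fun_add (hmodulus.const_mul 3)) fun z =>
          norm_mul_sub_one_sq_le hc hcF (F.eval z)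
    _ = 6 * ∫ z, ‖F.eval z - F.eval 0‖ ^ 2 ∂fockMeasure +
          3 * ∫ z, (‖F.eval z‖ - 1) ^ 2 ∂fockMeasure := by
        rw [integral_add (hosc.const_mul 6) (hmodulus.const_mul 3), integral_const_mul,
          integral_const_mul]
    _ ≤ 789507 * ∫ z, (‖F.eval z‖ - 1) ^ 2 ∂fockMeasure := by
        linarith [integral_norm_eval_sub_eval_zero_sq_le F,
          integral_norm_derivative_eval_sq_dampedFockMeasure_le F]

end PhaseRetrieval

theorem stmt1_general (F : ℂ[X]) :
    ∃ w : ℂ, ‖w‖ = 1 ∧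
      fockNorm (fun z => w * F.eval z - 1) ≤ 889 * fockNorm (fun z => ‖F.eval z‖ - 1) := by
  obtain ⟨c, hc, hcF⟩ := Complex.exists_norm_eq_mul_self (F.eval 0)
  refine ⟨c, hc, ?_⟩
  have henergy : 0 ≤ ∫ z, (‖F.eval z‖ - 1) ^ 2 ∂fockMeasure :=
    integral_nonneg fun z => sq_nonneg _
  simp only [fockNorm_eq_sqrt_integral, Real.norm_eq_abs, sq_abs]
  rw [Real.sqrt_le_left (by positivity), mul_pow, Real.sq_sqrt henergy]
  linarith [integral_norm_mul_eval_sub_one_sq_le hc F hcF]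

/-- **Local-local stable phase retrieval at 1 in the Bargmann–Fock space.**
With `δ = 1/4601` and `M̃ = 23003`: for every polynomial `P` with `‖P‖_F ≤ δ`
there is a unimodular `w` with `‖w(1+P) − 1‖_F ≤ M̃ ‖|1+P| − 1‖_F`. -/
theorem stmt1 (P : Polynomial ℂ)
    (hP : fockNorm (fun z => P.eval z) ≤ 1 / 4601) :
    ∃ w : ℂ, ‖w‖ = 1 ∧
      fockNorm (fun z => w * (1 + P.eval z) - 1)
        ≤ 23003 * fockNorm (fun z => ‖1 + P.eval z‖ - 1) := by
  obtain ⟨w, hw, hbound⟩ := stmt1_general (1 + P)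
  simp only [eval_add, eval_one] at hbound
  exact ⟨w, hw, hbound.trans (mul_le_mul_of_nonneg_right (by norm_num) (Real.sqrt_nonneg _))⟩
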